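/- arXiv:1810.10599 — 3 statements merged into one kernel-verified Lean document; each statement's English description precedes it below -/
import Mathlib

section
/- Let a ∈ ℝ³, let Π_a : ℝ³ ∖ {a} → S² be the map Π_a(x) = (x − a)/|x − a|, and let h : U → ℝ³ be differentiable at a point x of an open set U ⊂ ℝⁿ with h(x) ≠ a. Then the composition Π_a ∘ h is differentiable at x and |∇(Π_a ∘ h)(x)| ≤ 2 |∇h(x)| / |h(x) − a|, where |·| denotes the Euclidean (Frobenius) norm of the total derivative. -/
open Metric Set

noncomputable section

abbrev E3 : Type := EuclideanSpace ℝ (Fin 3)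

/-- Squared Frobenius norm of the full gradient of a map `ℝⁿ → ℝ³` at `x`. -/
def grad2n {n : ℕ} (h : EuclideanSpace ℝ (Fin n) → E3)
    (x : EuclideanSpace ℝ (Fin n)) : ℝ :=
  ∑ i : Fin n, ‖fderiv ℝ h x (EuclideanSpace.single i (1:ℝ))‖ ^ 2

/-- The radial projection `Π_a : ℝ³ ∖ {a} → S²`. -/
def radialProj (a : E3) (x : E3) : E3 := ‖x - a‖⁻¹ • (x - a)

theorem radialProj_aux {a : E3} {p : E3} (hne : p ≠ a) :
    ∃ L : E3 →L[ℝ] E3, HasFDerivAt (radialProj a) L p ∧ ∀ v, ‖L v‖ ≤ 2 / ‖p - a‖ * ‖v‖ := by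
  have hpa : p - a ≠ 0 := sub_ne_zero.mpr hne
  have hN : 0 < ‖p - a‖ := norm_pos_iff.mpr hpa
  have h1 : HasFDerivAt (fun y : E3 => y - a) (ContinuousLinearMap.id ℝ E3) p :=
    (hasFDerivAt_id p).sub_const a
  have hd : DifferentiableAt ℝ (fun y : E3 => ‖y - a‖) p :=
    h1.differentiableAt.norm ℝ hpa
  have hlip : LipschitzWith 1 (fun y : E3 => ‖y - a‖) := by
    apply LipschitzWith.of_dist_le_mul
    intro y z
    rw [Real.dist_eq, dist_eq_norm]
    have := abs_norm_sub_norm_le (y - a) (z - a)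
    simpa using this
  set N' := fderiv ℝ (fun y : E3 => ‖y - a‖) p with hN'
  have hb : ‖N'‖ ≤ 1 := by
    simpa using norm_fderiv_le_of_lipschitz ℝ hlip (x₀ := p)
  have hi := (hasDerivAt_inv hN.ne').comp_hasFDerivAt p hd.hasFDerivAt
  refine ⟨_, hi.smul h1, fun v => ?_⟩
  have hv : ‖N' v‖ ≤ ‖v‖ := by
    simpa using N'.le_of_opNorm_le hb v
  have e1 : ‖‖p - a‖⁻¹ • v‖ = ‖p - a‖⁻¹ * ‖v‖ := by
    rw [norm_smul, norm_inv, norm_norm]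
  have e2 : ‖((-(‖p - a‖ ^ 2)⁻¹) * N' v) • (p - a)‖ ≤ ‖p - a‖⁻¹ * ‖v‖ := by
    rw [norm_smul, norm_mul, norm_neg, norm_inv, norm_pow, norm_norm]
    calc (‖p - a‖ ^ 2)⁻¹ * ‖N' v‖ * ‖p - a‖ = ‖p - a‖⁻¹ * ‖N' v‖ := by field_simp
      _ ≤ _ := by gcongr
  calc _ = ‖‖p - a‖⁻¹ • v + ((-(‖p - a‖ ^ 2)⁻¹) * N' v) • (p - a)‖ := by
        simp [hN']
    _ ≤ _ := norm_add_le _ _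
    _ ≤ ‖p - a‖⁻¹ * ‖v‖ + ‖p - a‖⁻¹ * ‖v‖ := by rw [e1]; gcongr
    _ = _ := by ring

theorem radial_projection_composition_gradient_bound
    {n : ℕ} (a : E3) (U : Set (EuclideanSpace ℝ (Fin n))) (hU : IsOpen U)
    (h : EuclideanSpace ℝ (Fin n) → E3) (x : EuclideanSpace ℝ (Fin n))
    (hx : x ∈ U) (hdiff : DifferentiableAt ℝ h x) (hne : h x ≠ a) :
    DifferentiableAt ℝ (fun y => radialProj a (h y)) x ∧
    Real.sqrt (grad2n (fun y => radialProj a (h y)) x) ≤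
      2 * Real.sqrt (grad2n h x) / ‖h x - a‖ := by
  obtain ⟨L, hL, hb⟩ := radialProj_aux hne
  have hN : 0 < ‖h x - a‖ := norm_pos_iff.mpr (sub_ne_zero.mpr hne)
  have hc : HasFDerivAt (fun y => radialProj a (h y)) (L.comp (fderiv ℝ h x)) x :=
    hL.comp x hdiff.hasFDerivAt
  refine ⟨hc.differentiableAt, ?_⟩
  have key : grad2n (fun y => radialProj a (h y)) x ≤ (2 / ‖h x - a‖) ^ 2 * grad2n h x := by
    unfold grad2n
    rw [hc.fderiv, Finset.mul_sum]
    refine Finset.sum_le_sum fun i _ => ?_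
    rw [← mul_pow]
    exact pow_le_pow_left₀ (norm_nonneg _) (hb _) 2
  calc _ ≤ Real.sqrt ((2 / ‖h x - a‖) ^ 2 * grad2n h x) := Real.sqrt_le_sqrt key
    _ = 2 / ‖h x - a‖ * Real.sqrt (grad2n h x) := by
        rw [Real.sqrt_mul (by positivity), Real.sqrt_sq (by positivity)]
    _ = _ := by ring
end
end

section
/- Let 0 < ρ ≤ 1 and let a ∈ ℝ³ with |a| < ρ/2. Then the radial projection Π_a(x) = (x − a)/|x − a| restricted to the sphere ∂B_ρ is a bijection onto S², and its inverse (Π_a|∂B_ρ)^{−1} : S² → ∂B_ρ is Lipschitz with Lipschitz constant at most 2ρ ≤ 2. -/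
open Metric Set

noncomputable section

def sroot (ρ : ℝ) (a u : E3) : ℝ := Real.sqrt ((inner ℝ a u)^2 + (ρ^2 - ‖a‖^2))

def psi (ρ : ℝ) (a u : E3) : E3 := a + (sroot ρ a u - inner ℝ a u) • u

lemma sroot_sq (ρ : ℝ) (a u : E3) (ha : ‖a‖ < ρ / 2) :
    sroot ρ a u ^ 2 = (inner ℝ a u)^2 + (ρ^2 - ‖a‖^2) := by
  apply Real.sq_sqrt
  nlinarith [norm_nonneg a, sq_nonneg (inner ℝ a u : ℝ)]

lemma sroot_gt (ρ : ℝ) (a u : E3) (ha : ‖a‖ < ρ / 2) :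
    |(inner ℝ a u : ℝ)| < sroot ρ a u := by
  apply Real.lt_sqrt_of_sq_lt
  rw [sq_abs]
  nlinarith [norm_nonneg a]

lemma inner_abs_le (a u : E3) (hu : ‖u‖ = 1) : |(inner ℝ a u : ℝ)| ≤ ‖a‖ := by
  simpa [hu] using abs_real_inner_le_norm a u

lemma sroot_le (ρ : ℝ) (a u : E3) (hρ : 0 < ρ) (hu : ‖u‖ = 1) :
    sroot ρ a u ≤ ρ := by
  apply Real.sqrt_le_iff.2 ⟨hρ.le, ?_⟩
  have := sq_le_sq' (by linarith [norm_nonneg a, abs_nonneg (inner ℝ a u : ℝ), inner_abs_le a u hu]) (inner_abs_le a u hu)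
  rw [sq_abs] at this
  linarith

lemma psi_mem (ρ : ℝ) (a u : E3) (hρ : 0 < ρ) (ha : ‖a‖ < ρ / 2) (hu : ‖u‖ = 1) :
    ‖psi ρ a u‖ = ρ := by
  have h : ‖psi ρ a u‖^2 = ρ^2 := by
    unfold psi
    rw [norm_add_sq_real, norm_smul, hu, inner_smul_right, mul_one, Real.norm_eq_abs, sq_abs]
    nlinarith [sroot_sq ρ a u ha]
  exact (pow_left_inj₀ (norm_nonneg _) hρ.le two_ne_zero).1 h

lemma proj_psi (ρ : ℝ) (a u : E3) (ha : ‖a‖ < ρ / 2) (hu : ‖u‖ = 1) :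
    radialProj a (psi ρ a u) = u := by
  have h : 0 < sroot ρ a u - inner ℝ a u := by
    linarith [sroot_gt ρ a u ha, le_abs_self (inner ℝ a u : ℝ)]
  simp only [radialProj, psi, add_sub_cancel_left]
  rw [norm_smul, hu, mul_one, Real.norm_of_nonneg h.le, smul_smul, inv_mul_cancel₀ h.ne', one_smul]

lemma norm_pos_aux (ρ : ℝ) (a x : E3) (hρ : 0 < ρ) (ha : ‖a‖ < ρ / 2) (hx : ‖x‖ = ρ) :
    0 < ‖x - a‖ := by
  linarith [norm_sub_norm_le x a]

lemma proj_norm (ρ : ℝ) (a x : E3) (hρ : 0 < ρ) (ha : ‖a‖ < ρ / 2) (hx : ‖x‖ = ρ) :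
    ‖radialProj a x‖ = 1 := by
  have h := norm_pos_aux ρ a x hρ ha hx
  rw [radialProj, norm_smul, norm_inv, norm_norm, inv_mul_cancel₀ h.ne']

lemma psi_proj (ρ : ℝ) (a x : E3) (hρ : 0 < ρ) (ha : ‖a‖ < ρ / 2) (hx : ‖x‖ = ρ) :
    psi ρ a (radialProj a x) = x := by
  have h := norm_pos_aux ρ a x hρ ha hx
  have hX : x - a = ‖x - a‖ • radialProj a x := by
    rw [radialProj, smul_smul, mul_inv_cancel₀ h.ne', one_smul]
  have hu := proj_norm ρ a x hρ ha hx
  have hs := sroot_sq ρ a (radialProj a x) ha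
  have hg := sroot_gt ρ a (radialProj a x) ha
  set u := radialProj a x
  set p := ‖x - a‖
  have hx' : x = a + p • u := by rw [← hX]; abel
  have h2 : ‖x‖^2 = ‖a‖^2 + 2 * (p * inner ℝ a u) + p^2 := by
    rw [hx', norm_add_sq_real, norm_smul, hu, inner_smul_right, mul_one, Real.norm_eq_abs, sq_abs]
  rw [hx] at h2
  have h3 : (sroot ρ a u - inner ℝ a u - p) * (sroot ρ a u + inner ℝ a u + p) = 0 := by
    nlinarith
  have h4 : 0 < sroot ρ a u + inner ℝ a u + p := by
    linarith [neg_abs_le (inner ℝ a u : ℝ)]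
  have h5 : sroot ρ a u - inner ℝ a u = p := by
    rcases mul_eq_zero.1 h3 with h | h <;> linarith
  rw [psi, h5, ← hx']

lemma psi_lip (ρ : ℝ) (a u v : E3) (hρ : 0 < ρ) (ha : ‖a‖ < ρ / 2) (hu : ‖u‖ = 1)
    (hv : ‖v‖ = 1) : ‖psi ρ a u - psi ρ a v‖ ≤ 2 * ρ * ‖u - v‖ := by
  have hsu := sroot_sq ρ a u ha
  have hsv := sroot_sq ρ a v ha
  have hgu := sroot_gt ρ a u ha
  have hgv := sroot_gt ρ a v ha
  have hlu := sroot_le ρ a u hρ hu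
  have hlv := sroot_le ρ a v hρ hv
  have hbu := inner_abs_le a u hu
  have hbv := inner_abs_le a v hv
  have hd : |(inner ℝ a u : ℝ) - inner ℝ a v| ≤ ‖a‖ * ‖u - v‖ := by
    rw [← inner_sub_right]; exact abs_real_inner_le_norm _ _
  have hn : ‖psi ρ a u - psi ρ a v‖^2 =
      (sroot ρ a u - inner ℝ a u) * (sroot ρ a v - inner ℝ a v) * ‖u - v‖^2
      + ((sroot ρ a u - inner ℝ a u) - (sroot ρ a v - inner ℝ a v))^2 := by
    simp only [psi, add_sub_add_left_eq_sub]
    rw [norm_sub_sq_real, norm_sub_sq_real, norm_smul, norm_smul, hu, hv, inner_smul_left,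
      inner_smul_right, mul_one, mul_one, Real.norm_eq_abs, Real.norm_eq_abs, sq_abs, sq_abs]
    simp only [conj_trivial]
    ring
  set s := sroot ρ a u
  set t := sroot ρ a v
  set b : ℝ := inner ℝ a u
  set c : ℝ := inner ℝ a v
  have hst : 0 < s + t := by linarith [abs_nonneg b, abs_nonneg c]
  have h1 : |s - t| ≤ |b - c| := by
    have e : |s - t| * (s + t) = |b - c| * |b + c| := by
      rw [← abs_mul, ← abs_of_pos hst, ← abs_mul]
      congr 1; nlinarith
    have : |b + c| ≤ s + t := by linarith [abs_add_le b c]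
    exact le_of_mul_le_mul_right
      (e.le.trans (mul_le_mul_of_nonneg_left this (abs_nonneg _))) hst
  have h2 : |(s - b) - (t - c)| ≤ ρ * ‖u - v‖ := by
    have e : (s - b) - (t - c) = (s - t) - (b - c) := by ring
    have := abs_sub (s - t) (b - c)
    rw [e]
    nlinarith [norm_nonneg (u - v)]
  have h3 : ((s - b) - (t - c))^2 ≤ (ρ * ‖u - v‖)^2 := by
    rw [← sq_abs]; exact pow_le_pow_left₀ (abs_nonneg _) h2 2
  have h4 : (s - b) * (t - c) ≤ (3 / 2 * ρ) * (3 / 2 * ρ) := by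
    apply mul_le_mul
    · linarith [neg_abs_le b]
    · linarith [neg_abs_le c]
    · linarith [le_abs_self c]
    · linarith
  have h5 := mul_le_mul_of_nonneg_right h4 (sq_nonneg ‖u - v‖)
  refine (sq_le_sq₀ (norm_nonneg _) (by positivity)).1 ?_
  rw [hn]
  nlinarith [sq_nonneg (ρ * ‖u - v‖)]

theorem radial_projection_bijective_with_lipschitz_inverse
    (ρ : ℝ) (hρ0 : 0 < ρ) (hρ1 : ρ ≤ 1) (a : E3) (ha : ‖a‖ < ρ / 2) :
    BijOn (radialProj a) (sphere (0:E3) ρ) (sphere (0:E3) 1) ∧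
    ∃ Ψ : E3 → E3, MapsTo Ψ (sphere (0:E3) 1) (sphere (0:E3) ρ) ∧
      InvOn Ψ (radialProj a) (sphere (0:E3) ρ) (sphere (0:E3) 1) ∧
      LipschitzOnWith (Real.toNNReal (2 * ρ)) Ψ (sphere (0:E3) 1) ∧
      2 * ρ ≤ 2 := by
  have h1 : MapsTo (radialProj a) (sphere (0:E3) ρ) (sphere (0:E3) 1) := by
    intro x hx
    rw [mem_sphere_zero_iff_norm] at *
    exact proj_norm ρ a x hρ0 ha hx
  have h2 : MapsTo (psi ρ a) (sphere (0:E3) 1) (sphere (0:E3) ρ) := by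
    intro x hx
    rw [mem_sphere_zero_iff_norm] at *
    exact psi_mem ρ a x hρ0 ha hx
  have h3 : InvOn (psi ρ a) (radialProj a) (sphere (0:E3) ρ) (sphere (0:E3) 1) :=
    ⟨fun x hx => psi_proj ρ a x hρ0 ha (mem_sphere_zero_iff_norm.1 hx),
      fun u hu => proj_psi ρ a u ha (mem_sphere_zero_iff_norm.1 hu)⟩
  refine ⟨h3.bijOn h1 h2, psi ρ a, h2, h3, ?_, by linarith⟩
  apply LipschitzOnWith.of_dist_le_mul
  intro u hu v hv
  rw [dist_eq_norm, dist_eq_norm, Real.coe_toNNReal _ (by positivity)]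
  exact psi_lip ρ a u v hρ0 ha (mem_sphere_zero_iff_norm.1 hu) (mem_sphere_zero_iff_norm.1 hv)
end
end

section
/- Let C > 0 and K > 0, and let D : [1/2, 1] → [0, ∞) be a nondecreasing, locally absolutely continuous function satisfying D(σ) ≤ C (D'(σ) + K)^{1/2} for almost every σ ∈ [1/2, 1]. Then D(1/2) ≤ 2K (√(1 + K/C²) − 1)^{−1}; equivalently, D(1/2) ≤ 2/θ₀ where θ₀ is the positive root of the polynomial K θ² + 2θ − C^{−2}. -/
open MeasureTheory Set intervalIntegral

noncomputable section

theorem differential_inequality_bound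
    (C K : ℝ) (hC : 0 < C) (hK : 0 < K) (D : ℝ → ℝ)
    (hmono : MonotoneOn D (Icc (1/2 : ℝ) 1))
    (hnonneg : ∀ σ ∈ Icc (1/2 : ℝ) 1, 0 ≤ D σ)
    -- local absolute continuity of the monotone function `D`, stated as the validity
    -- of the fundamental theorem of calculus for its a.e. derivative
    (hAC : ∀ s ∈ Icc (1/2 : ℝ) 1, ∀ t ∈ Icc (1/2 : ℝ) 1, s ≤ t →
      D t - D s = ∫ σ in s..t, deriv D σ)
    (hineq : ∀ᵐ σ ∂(volume.restrict (Icc (1/2 : ℝ) 1)),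
      D σ ≤ C * Real.sqrt (deriv D σ + K)) :
    D (1/2) ≤ 2 * K * (Real.sqrt (1 + K / C ^ 2) - 1)⁻¹ := by
  by_contra! hcon
  have hKC : 0 < K / C ^ 2 := by positivity
  have hr : 1 < Real.sqrt (1 + K / C ^ 2) := by
    rw [Real.lt_sqrt (by norm_num)]; linarith
  have hrsq : Real.sqrt (1 + K / C ^ 2) ^ 2 = 1 + K / C ^ 2 := Real.sq_sqrt (by linarith)
  set r := Real.sqrt (1 + K / C ^ 2) with hrdef
  obtain ⟨θ, hθ⟩ : ∃ θ, θ = (r - 1) / K := ⟨_, rfl⟩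
  have hθ0 : 0 < θ := by rw [hθ]; exact div_pos (by linarith) hK
  have hrθ : r = K * θ + 1 := by rw [hθ]; field_simp; ring
  have hpoly : C ^ 2 * (K * θ ^ 2 + 2 * θ) = 1 := by
    rw [hrθ] at hrsq
    field_simp at hrsq
    have : K * (C ^ 2 * (K * θ ^ 2 + 2 * θ)) = K * 1 := by nlinarith
    exact mul_left_cancel₀ hK.ne' this
  have hB : 2 * K * (r - 1)⁻¹ = 2 / θ := by
    rw [hrθ]; field_simp; ring
  rw [hB] at hcon
  set x := D (1/2) with hx
  have hx0 : 0 < x := lt_trans (by positivity) hcon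
  have hxθ : 2 < x * θ := by rwa [div_lt_iff₀ hθ0] at hcon
  have hhalf : (1/2 : ℝ) ∈ Icc (1/2 : ℝ) 1 := by norm_num
  have hone : (1 : ℝ) ∈ Icc (1/2 : ℝ) 1 := by norm_num
  -- step inequality
  have step : ∀ s ∈ Icc (1/2 : ℝ) 1, ∀ t ∈ Icc (1/2 : ℝ) 1, s ≤ t →
      2 * θ * D s ^ 2 * (t - s) ≤ D t - D s := by
    intro s hs t ht hst
    rw [hAC s hs t ht hst]
    have hsub : Icc s t ⊆ Icc (1/2 : ℝ) 1 := Icc_subset_Icc hs.1 ht.2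
    have hint : IntervalIntegrable (deriv D) volume s t := by
      apply MonotoneOn.intervalIntegrable_deriv
      rw [uIcc_of_le hst]
      exact hmono.mono hsub
    have hc : ∫ σ in s..t, (2 * θ * D s ^ 2) = 2 * θ * D s ^ 2 * (t - s) := by
      rw [intervalIntegral.integral_const, smul_eq_mul, mul_comm]
    rw [← hc]
    apply intervalIntegral.integral_mono_ae_restrict hst (by simp) hint
    filter_upwards [ae_restrict_of_ae_restrict_of_subset hsub hineq,
      ae_restrict_mem measurableSet_Icc] with σ h1 h2
    have hDs : x ≤ D s := hmono hhalf hs hs.1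
    have hDσ : D s ≤ D σ := hmono hs (hsub h2) h2.1
    have hpos : 0 < D σ := by linarith
    have hsq : 0 < Real.sqrt (deriv D σ + K) := by
      by_contra h
      nlinarith
    have h3 := Real.sq_sqrt (Real.sqrt_pos.1 hsq).le
    have h4 : D σ ^ 2 ≤ C ^ 2 * (deriv D σ + K) := by
      rw [← h3, ← mul_pow]; exact pow_le_pow_left₀ hpos.le h1 2
    have h5 : D s ^ 2 ≤ C ^ 2 * (deriv D σ + K) :=
      le_trans (pow_le_pow_left₀ (by linarith) hDσ 2) h4
    have h6 : D s ^ 2 * (K * θ ^ 2 + 2 * θ) ≤ deriv D σ + K := by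
      have h := mul_le_mul_of_nonneg_right h5 (by positivity : 0 ≤ K * θ ^ 2 + 2 * θ)
      have e : C ^ 2 * (deriv D σ + K) * (K * θ ^ 2 + 2 * θ) = deriv D σ + K := by
        linear_combination (deriv D σ + K) * hpoly
      linarith
    have h7 : 1 ≤ D s * θ := by nlinarith
    have h8 : K ≤ K * (D s * θ) ^ 2 := le_mul_of_one_le_right hK.le (one_le_pow₀ h7)
    show 2 * θ * D s ^ 2 ≤ deriv D σ
    nlinarith
  have hmem : ∀ k : ℕ, 1/2 + (1 / (θ * x)) * (1 - (1/2 : ℝ) ^ k) ∈ Icc (1/2 : ℝ) 1 := by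
    intro k
    have a1 : (1/2 : ℝ) ^ k ≤ 1 := pow_le_one₀ (by norm_num) (by norm_num)
    have a2 : 0 < (1/2 : ℝ) ^ k := by positivity
    have a3 : 1 / (θ * x) ≤ 1 / 2 := by
      apply one_div_le_one_div_of_le (by norm_num); linarith
    have a4 : 0 < 1 / (θ * x) := by positivity
    constructor <;> nlinarith
  have key : ∀ k : ℕ, 2 ^ k * x ≤ D (1/2 + (1 / (θ * x)) * (1 - (1/2 : ℝ) ^ k)) := by
    intro k
    induction k with
    | zero => simp [hx]
    | succ k ih =>
      have a2 : 0 < (1/2 : ℝ) ^ k := by positivity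
      have a4 : 0 < 1 / (θ * x) := by positivity
      have h := step _ (hmem k) _ (hmem (k+1)) (by rw [pow_succ]; nlinarith)
      have e : (1/2 + (1 / (θ * x)) * (1 - (1/2 : ℝ) ^ (k+1))) -
        (1/2 + (1 / (θ * x)) * (1 - (1/2 : ℝ) ^ k)) = 1 / (2 * θ * x * 2 ^ k) := by
        rw [pow_succ, one_div_pow]; field_simp; ring
      rw [e] at h
      set y := D (1/2 + (1 / (θ * x)) * (1 - (1/2 : ℝ) ^ k))
      have h2 : 2 ^ k * x ≤ 2 * θ * y ^ 2 * (1 / (2 * θ * x * 2 ^ k)) := by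
        have : 2 * θ * y ^ 2 * (1 / (2 * θ * x * 2 ^ k)) = y ^ 2 / (2 ^ k * x) := by
          field_simp
        rw [this, le_div_iff₀ (by positivity), ← sq]
        exact pow_le_pow_left₀ (by positivity) ih 2
      rw [pow_succ]
      linarith
  obtain ⟨n, hn⟩ := pow_unbounded_of_one_lt (D 1 / x) (by norm_num : (1 : ℝ) < 2)
  rw [div_lt_iff₀ hx0] at hn
  have := hmono (hmem n) hone (hmem n).2
  linarith [key n]
end
end
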